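/- arXiv:math/0406195 — 3 statements merged into one kernel-verified Lean document; each statement's English description precedes it below -/
import Mathlib

section
/- Let L be an algebraically closed field and let f, g ∈ L[x,y] be nonconstant polynomials of total degrees d and e respectively. Assume that the degree-d homogeneous component of f and the degree-e homogeneous component of g have no common zero in L² \ {(0,0)} (i.e., the projective curves f = 0 and g = 0 have no common point on the line at infinity). Then the set Z = {p ∈ L² : f(p) = g(p) = 0} of common zeros is finite and ∑_{p ∈ Z} I(f,g,p) = d·e. -/
open MvPolynomial

/-- The maximal ideal of `L[x,y]` corresponding to the point `p = (p₁, p₂)`, i.e. the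
kernel of evaluation at `p`, which is the ideal `(x - p₁, y - p₂)`. -/
noncomputable def ptIdeal (L : Type) [Field L] (p : L × L) : Ideal (MvPolynomial (Fin 2) L) :=
  RingHom.ker (aeval (R := L) ![p.1, p.2])

theorem ptIdeal_isMaximal (L : Type) [Field L] (p : L × L) : (ptIdeal L p).IsMaximal :=
  RingHom.ker_isMaximal_of_surjective _ (fun x => ⟨C x, by simp⟩)

/-- The intersection multiplicity `I(f, g, p)` of the plane curves `f = 0` and `g = 0`
at the point `p`: the dimension over `L` of the localization of `L[x,y]/(f,g)` at the
maximal ideal `(x - p₁, y - p₂)` (computed as the quotient of the localization of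
`L[x,y]` at that maximal ideal by the ideal generated by `f` and `g`). -/
noncomputable def interMult (L : Type) [Field L] (f g : MvPolynomial (Fin 2) L)
    (p : L × L) : Cardinal :=
  haveI : (ptIdeal L p).IsPrime := (ptIdeal_isMaximal L p).isPrime
  letI : Algebra L (Localization.AtPrime (ptIdeal L p)) :=
    ((algebraMap (MvPolynomial (Fin 2) L) (Localization.AtPrime (ptIdeal L p))).comp
      (algebraMap L (MvPolynomial (Fin 2) L))).toAlgebra
  Module.rank L
    (Localization.AtPrime (ptIdeal L p) ⧸
      (Ideal.span {algebraMap (MvPolynomial (Fin 2) L) (Localization.AtPrime (ptIdeal L p)) f,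
        algebraMap (MvPolynomial (Fin 2) L) (Localization.AtPrime (ptIdeal L p)) g}))

namespace MvPolynomial

section Components

variable {σ R : Type*} [CommSemiring R]

/-- If `p` and `q` have total degree at most `m` and `n`, the component of degree `m + n` of
`p * q` is the product of the components of degree `m` and `n`. -/
theorem homogeneousComponent_mul_of_totalDegree_le {p q : MvPolynomial σ R} {m n : ℕ}
    (hp : p.totalDegree ≤ m) (hq : q.totalDegree ≤ n) :
    homogeneousComponent (m + n) (p * q) =
      homogeneousComponent m p * homogeneousComponent n q := by
  classical
  ext s
  have hvan (r : MvPolynomial σ R) {k : ℕ} (hr : r.totalDegree ≤ k) (u : σ →₀ ℕ)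
      (hu : k < u.degree) : coeff u r = 0 :=
    coeff_eq_zero_of_totalDegree_lt (hr.trans_lt hu)
  rw [coeff_homogeneousComponent]
  split_ifs with hs
  · rw [coeff_mul, coeff_mul]
    refine Finset.sum_congr rfl fun ⟨u, v⟩ huv ↦ ?_
    have huv' : u.degree + v.degree = m + n := by
      rw [← map_add, Finset.HasAntidiagonal.mem_antidiagonal.mp huv, hs]
    simp only [coeff_homogeneousComponent]
    rcases lt_trichotomy u.degree m with h | h | h
    · rw [hvan q hq v (by lia)]; simp
    · rw [if_pos h, if_pos (by lia)]
    · rw [hvan p hp u h]; simp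
  · exact (((homogeneousComponent_isHomogeneous m p).mul
      (homogeneousComponent_isHomogeneous n q)).coeff_eq_zero hs).symm

theorem totalDegree_le_of_homogeneousComponent_eq_zero {p : MvPolynomial σ R} {n : ℕ}
    (hp : p.totalDegree ≤ n + 1) (h : homogeneousComponent (n + 1) p = 0) :
    p.totalDegree ≤ n := by
  classical
  rw [totalDegree, Finset.sup_le_iff]
  intro s hs
  have hle := (le_totalDegree hs).trans hp
  have hne : s.degree ≠ n + 1 := fun hsn ↦ by
    have := congrArg (coeff s) h
    rw [coeff_homogeneousComponent, if_pos hsn, coeff_zero] at this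
    exact mem_support_iff.mp hs this
  have hdeg : s.degree = s.sum fun _ e ↦ e := rfl
  lia

end Components

section Bivariate

variable {K : Type*} [Field K]

theorem IsHomogeneous.coeff_aeval_X_one {k : ℕ} {p : MvPolynomial (Fin 2) K}
    (hp : p.IsHomogeneous k) :
    (MvPolynomial.aeval ![(Polynomial.X : Polynomial K), 1] p).coeff k = eval ![1, 0] p := by
  rw [p.as_sum, map_sum, map_sum, Polynomial.finsetSum_coeff]
  refine Finset.sum_congr rfl fun s hs ↦ ?_
  have hdeg : s 0 + s 1 = k := by
    have := hp (mem_support_iff.mp hs)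
    simpa [Finsupp.weight_apply, Finsupp.sum_fintype] using this
  rw [aeval_monomial, eval_monomial, Finsupp.prod_fintype _ _ (by simp),
    Finsupp.prod_fintype _ _ (by simp)]
  simp only [Fin.prod_univ_two, Polynomial.algebraMap_eq, Matrix.cons_val_zero,
    Matrix.cons_val_one, one_pow, mul_one, one_mul, Polynomial.coeff_C_mul, Polynomial.coeff_X_pow]
  rcases Nat.eq_zero_or_pos (s 1) with h | h
  · simp [h, show k = s 0 by lia]
  · simp [h.ne', show k ≠ s 0 by lia]

/-- A binary form of positive degree over an algebraically closed field has a nontrivial zero. -/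
theorem IsHomogeneous.exists_eval_eq_zero [IsAlgClosed K] {k : ℕ} (hk : 0 < k)
    {p : MvPolynomial (Fin 2) K} (hp : p.IsHomogeneous k) :
    ∃ x y : K, ¬(x = 0 ∧ y = 0) ∧ eval ![x, y] p = 0 := by
  by_cases h0 : eval ![(1 : K), 0] p = 0
  · exact ⟨1, 0, by simp, h0⟩
  set q : Polynomial K := MvPolynomial.aeval ![Polynomial.X, 1] p with hq
  have hdeg : q.degree ≠ 0 := fun h ↦ by
    have : k ≤ q.natDegree := Polynomial.le_natDegree_of_ne_zero (by rwa [hp.coeff_aeval_X_one])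
    exact hk.ne' (Nat.le_zero.mp (this.trans_eq (Polynomial.natDegree_eq_of_degree_eq_some h)))
  obtain ⟨t, ht⟩ := IsAlgClosed.exists_root q hdeg
  refine ⟨t, 1, by simp, ?_⟩
  have hcomp : (Polynomial.aeval t).comp (MvPolynomial.aeval ![(Polynomial.X : Polynomial K), 1]) =
      MvPolynomial.aeval ![t, 1] := by
    ext i; fin_cases i <;> simp
  have := DFunLike.congr_fun hcomp p
  rw [AlgHom.comp_apply, ← hq, Polynomial.coe_aeval_eq_eval, ht.eq_zero] at this
  exact this.symm

/-- Plane curves whose top-degree forms have no common nontrivial zero have no common component. -/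
theorem isRelPrime_of_top_forms [IsAlgClosed K] {f g : MvPolynomial (Fin 2) K} (hf : f ≠ 0)
    (hg : g ≠ 0)
    (hinf : ∀ x y : K, ¬(x = 0 ∧ y = 0) →
      ¬(eval ![x, y] (homogeneousComponent f.totalDegree f) = 0 ∧
        eval ![x, y] (homogeneousComponent g.totalDegree g) = 0)) :
    IsRelPrime f g := by
  intro h hhf hhg
  have hh : h ≠ 0 := ne_zero_of_dvd_ne_zero hf hhf
  have htop {r : MvPolynomial (Fin 2) K} (hr : r ≠ 0) (hhr : h ∣ r) :
      homogeneousComponent h.totalDegree h ∣ homogeneousComponent r.totalDegree r := by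
    obtain ⟨c, rfl⟩ := hhr
    rw [totalDegree_mul_of_isDomain hh (right_ne_zero_of_mul hr),
      homogeneousComponent_mul_of_totalDegree_le le_rfl le_rfl]
    exact dvd_mul_right _ _
  rcases Nat.eq_zero_or_pos h.totalDegree with h0 | hpos
  · rw [totalDegree_eq_zero_iff_eq_C] at h0
    rw [h0]
    refine IsUnit.map C (isUnit_iff_ne_zero.mpr fun hc ↦ hh ?_)
    rw [h0, hc, C_0]
  · obtain ⟨x, y, hxy, hzero⟩ :=
      (homogeneousComponent_isHomogeneous h.totalDegree h).exists_eval_eq_zero hpos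
    have hvan {r : MvPolynomial (Fin 2) K} (hr : homogeneousComponent h.totalDegree h ∣ r) :
        eval ![x, y] r = 0 := by
      obtain ⟨c, rfl⟩ := hr
      rw [map_mul, hzero, zero_mul]
    exact (hinf x y hxy ⟨hvan (htop hf hhf), hvan (htop hg hhg)⟩).elim

theorem finrank_restrictTotalDegree_fin_two (n : ℕ) :
    Module.finrank K (restrictTotalDegree (Fin 2) K n) * 2 = (n + 1) * (n + 2) := by
  classical
  let t : Finset (ℕ × ℕ) := (Finset.range (n + 1)).biUnion Finset.HasAntidiagonal.antidiagonal
  let φ : {s : Fin 2 →₀ ℕ | (s.sum fun _ e ↦ e) ≤ n} ≃ t :=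
    (Finsupp.equivFunOnFinite.trans (finTwoArrowEquiv ℕ)).subtypeEquiv fun s ↦ by
      simp [t, Finsupp.sum_fintype]
  have hcard : Module.finrank K (restrictTotalDegree (Fin 2) K n) = t.card := by
    exact (Module.finrank_eq_nat_card_basis (basisRestrictSupport K _)).trans
      ((Nat.card_congr φ).trans (by simp))
  rw [hcard, Finset.card_biUnion]
  · simp only [Finset.Nat.card_antidiagonal]
    clear hcard φ t
    induction n with
    | zero => simp
    | succ n ih => rw [Finset.sum_range_succ, add_mul, ih]; ring
  · intro i _ j _ hij
    exact Finset.disjoint_left.mpr fun x hx hx' ↦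
      hij ((Finset.HasAntidiagonal.mem_antidiagonal.mp hx).symm.trans
        (Finset.HasAntidiagonal.mem_antidiagonal.mp hx'))

end Bivariate

section Dimension

variable {K : Type*} [Field K]

/-- The linear map `(a, b) ↦ a * f + b * g` on polynomials of total degrees at most `i` and `j`. -/
noncomputable def combination (f g : MvPolynomial (Fin 2) K) (i j : ℕ) :
    (restrictTotalDegree (Fin 2) K i × restrictTotalDegree (Fin 2) K j) →ₗ[K]
      MvPolynomial (Fin 2) K :=
  (LinearMap.mulRight K f ∘ₗ Submodule.subtype _).coprod
    (LinearMap.mulRight K g ∘ₗ Submodule.subtype _)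

theorem mem_range_combination {f g p : MvPolynomial (Fin 2) K} {i j : ℕ} :
    p ∈ LinearMap.range (combination f g i j) ↔
      ∃ a b, a.totalDegree ≤ i ∧ b.totalDegree ≤ j ∧ a * f + b * g = p := by
  simp [combination, mem_restrictTotalDegree]

variable {f g : MvPolynomial (Fin 2) K}

theorem range_combination_le (m : ℕ) :
    LinearMap.range (combination f g (m + g.totalDegree) (m + f.totalDegree)) ≤
      restrictTotalDegree (Fin 2) K (m + f.totalDegree + g.totalDegree) := by
  intro p hp
  obtain ⟨a, b, ha, hb, rfl⟩ := mem_range_combination.mp hp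
  rw [mem_restrictTotalDegree]
  refine (totalDegree_add _ _).trans (max_le ?_ ?_)
  · exact (totalDegree_mul _ _).trans (by lia)
  · exact (totalDegree_mul _ _).trans (by lia)

theorem exists_eq_mul_of_mul_add_mul_eq_zero (hfg : IsRelPrime f g) (hg : g ≠ 0)
    {a b : MvPolynomial (Fin 2) K} (h : a * f + b * g = 0) : ∃ c, a = c * g ∧ b = -(c * f) := by
  have hdvd : g ∣ a * f := ⟨-b, by linear_combination h⟩
  obtain ⟨c, rfl⟩ := hfg.symm.dvd_of_dvd_mul_right hdvd
  exact ⟨c, mul_comm _ _, mul_right_cancel₀ hg (by linear_combination h)⟩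

theorem finrank_range_combination (hfg : IsRelPrime f g) (hg : g ≠ 0) (m : ℕ) :
    Module.finrank K
        (LinearMap.range (combination f g (m + g.totalDegree) (m + f.totalDegree))) +
      Module.finrank K (restrictTotalDegree (Fin 2) K m) =
    Module.finrank K (restrictTotalDegree (Fin 2) K (m + g.totalDegree)) +
      Module.finrank K (restrictTotalDegree (Fin 2) K (m + f.totalDegree)) := by
  let mulTo (h : MvPolynomial (Fin 2) K) : restrictTotalDegree (Fin 2) K m →ₗ[K]
      restrictTotalDegree (Fin 2) K (m + h.totalDegree) :=
    (LinearMap.mulRight K h).restrict fun c hc ↦ by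
      rw [mem_restrictTotalDegree] at hc ⊢
      exact (totalDegree_mul _ _).trans (by lia)
  let syz := (mulTo g).prod (-mulTo f)
  have hinj : Function.Injective syz := fun c c' hcc ↦ by
    have : (c : MvPolynomial (Fin 2) K) * g = c' * g :=
      congrArg (fun z ↦ (z.1 : MvPolynomial (Fin 2) K)) hcc
    exact Subtype.ext (mul_right_cancel₀ hg this)
  have hker : LinearMap.range syz =
      LinearMap.ker (combination f g (m + g.totalDegree) (m + f.totalDegree)) := by
    apply le_antisymm
    · rintro _ ⟨c, rfl⟩
      change (c : MvPolynomial (Fin 2) K) * g * f + -(c * f) * g = 0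
      ring
    · rintro ⟨⟨a, ha⟩, ⟨b, hb⟩⟩ hab
      obtain ⟨c, hca, hcb⟩ := exists_eq_mul_of_mul_add_mul_eq_zero hfg hg
        (show a * f + b * g = 0 from hab)
      refine ⟨⟨c, ?_⟩, Prod.ext (Subtype.ext hca.symm) (Subtype.ext hcb.symm)⟩
      rw [mem_restrictTotalDegree] at ha ⊢
      by_cases hc : c = 0
      · simp [hc]
      · rw [hca, totalDegree_mul_of_isDomain hc hg] at ha
        lia
  rw [← LinearMap.finrank_range_of_inj hinj, hker, LinearMap.finrank_range_add_finrank_ker,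
    Module.finrank_prod]

theorem finrank_restrictTotalDegree_eq_add (hfg : IsRelPrime f g) (hg : g ≠ 0) (m : ℕ) :
    Module.finrank K (restrictTotalDegree (Fin 2) K (m + f.totalDegree + g.totalDegree)) =
    Module.finrank K
        (LinearMap.range (combination f g (m + g.totalDegree) (m + f.totalDegree))) +
      f.totalDegree * g.totalDegree := by
  have h := finrank_range_combination hfg hg m
  have h0 := finrank_restrictTotalDegree_fin_two (K := K) m
  have h1 := finrank_restrictTotalDegree_fin_two (K := K) (m + g.totalDegree)
  have h2 := finrank_restrictTotalDegree_fin_two (K := K) (m + f.totalDegree)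
  have h3 := finrank_restrictTotalDegree_fin_two (K := K) (m + f.totalDegree + g.totalDegree)
  nlinarith

/-- The leading forms being coprime, cancellation of top terms in `a * f + b * g` can be undone. -/
theorem mem_range_combination_of_succ
    (htop : IsRelPrime (homogeneousComponent f.totalDegree f)
      (homogeneousComponent g.totalDegree g))
    (hg' : homogeneousComponent g.totalDegree g ≠ 0) {m : ℕ} {p : MvPolynomial (Fin 2) K}
    (hp : p ∈ LinearMap.range
      (combination f g (m + 1 + g.totalDegree) (m + 1 + f.totalDegree)))
    (hdeg : p.totalDegree ≤ m + f.totalDegree + g.totalDegree) :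
    p ∈ LinearMap.range (combination f g (m + g.totalDegree) (m + f.totalDegree)) := by
  obtain ⟨a, b, ha, hb, rfl⟩ := mem_range_combination.mp hp
  have hzero : homogeneousComponent (m + 1 + f.totalDegree + g.totalDegree) (a * f + b * g) = 0 :=
    homogeneousComponent_eq_zero _ _ (by lia)
  rw [map_add, homogeneousComponent_mul_of_totalDegree_le hb le_rfl, add_right_comm,
    homogeneousComponent_mul_of_totalDegree_le ha le_rfl] at hzero
  obtain ⟨c, hca, hcb⟩ := exists_eq_mul_of_mul_add_mul_eq_zero htop hg' hzero
  have hc : c.totalDegree ≤ m + 1 := by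
    by_cases hc : c = 0
    · simp [hc]
    have hhom := homogeneousComponent_isHomogeneous (m + 1 + g.totalDegree) a
    have hdegg := (homogeneousComponent_isHomogeneous g.totalDegree g).totalDegree hg'
    have hle := hhom.totalDegree_le
    rw [hca, totalDegree_mul_of_isDomain hc hg', hdegg] at hle
    lia
  have hself (r : MvPolynomial (Fin 2) K) (n : ℕ) :
      homogeneousComponent n (homogeneousComponent n r) = homogeneousComponent n r :=
    homogeneousComponent_eq_self (homogeneousComponent_isHomogeneous n r)
  have hcomp (h : MvPolynomial (Fin 2) K) :
      homogeneousComponent (m + 1 + h.totalDegree) (c * h) =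
        homogeneousComponent (m + 1 + h.totalDegree)
          (c * homogeneousComponent h.totalDegree h) := by
    rw [homogeneousComponent_mul_of_totalDegree_le hc le_rfl,
      homogeneousComponent_mul_of_totalDegree_le hc
        (homogeneousComponent_isHomogeneous h.totalDegree h).totalDegree_le, hself]
  have hmul (h : MvPolynomial (Fin 2) K) : (c * h).totalDegree ≤ m + 1 + h.totalDegree :=
    (totalDegree_mul _ _).trans (by lia)
  refine mem_range_combination.mpr ⟨a - c * g, b + c * f, ?_, ?_, by ring⟩
  · apply totalDegree_le_of_homogeneousComponent_eq_zero
    · exact (totalDegree_sub _ _).trans (max_le (by lia) ((hmul g).trans (by lia)))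
    · rw [add_right_comm, map_sub, hcomp, ← hca, hself, sub_self]
  · apply totalDegree_le_of_homogeneousComponent_eq_zero
    · exact (totalDegree_add _ _).trans (max_le (by lia) ((hmul f).trans (by lia)))
    · rw [add_right_comm, map_add, hcomp, ← neg_eq_iff_eq_neg.mpr hcb, map_neg, hself,
        add_neg_cancel]

theorem range_combination_mono {i j i' j' : ℕ} (hi : i ≤ i') (hj : j ≤ j') :
    LinearMap.range (combination f g i j) ≤ LinearMap.range (combination f g i' j') := by
  intro p hp
  obtain ⟨a, b, ha, hb, rfl⟩ := mem_range_combination.mp hp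
  exact mem_range_combination.mpr ⟨a, b, ha.trans hi, hb.trans hj, rfl⟩

theorem range_combination_le_span (i j : ℕ) :
    LinearMap.range (combination f g i j) ≤ (Ideal.span {f, g}).restrictScalars K := by
  intro p hp
  obtain ⟨a, b, -, -, rfl⟩ := mem_range_combination.mp hp
  exact Ideal.mem_span_pair.mpr ⟨a, b, rfl⟩

theorem restrictTotalDegree_inf_span
    (htop : IsRelPrime (homogeneousComponent f.totalDegree f)
      (homogeneousComponent g.totalDegree g))
    (hg' : homogeneousComponent g.totalDegree g ≠ 0) :
    restrictTotalDegree (Fin 2) K (f.totalDegree + g.totalDegree) ⊓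
        (Ideal.span {f, g}).restrictScalars K =
      LinearMap.range (combination f g g.totalDegree f.totalDegree) := by
  apply le_antisymm
  · rintro p ⟨hp, hI⟩
    obtain ⟨a, b, hab⟩ := Ideal.mem_span_pair.mp hI
    have hmem : p ∈ LinearMap.range (combination f g (a.totalDegree + b.totalDegree +
        g.totalDegree) (a.totalDegree + b.totalDegree + f.totalDegree)) :=
      mem_range_combination.mpr ⟨a, b, by lia, by lia, hab⟩
    rw [SetLike.mem_coe, mem_restrictTotalDegree] at hp
    generalize a.totalDegree + b.totalDegree = m at hmem
    induction m with
    | zero => exact range_combination_mono (by lia) (by lia) hmem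
    | succ m ih => exact ih (mem_range_combination_of_succ htop hg' hmem (by lia))
  · refine le_inf ?_ (range_combination_le_span _ _)
    have h := range_combination_le (f := f) (g := g) 0
    rwa [zero_add, zero_add] at h

theorem restrictTotalDegree_succ_le (hg : g ≠ 0) (hfg : IsRelPrime f g)
    (htop : IsRelPrime (homogeneousComponent f.totalDegree f)
      (homogeneousComponent g.totalDegree g))
    (hg' : homogeneousComponent g.totalDegree g ≠ 0)
    (m : ℕ) :
    restrictTotalDegree (Fin 2) K (m + 1 + f.totalDegree + g.totalDegree) ≤
      restrictTotalDegree (Fin 2) K (m + f.totalDegree + g.totalDegree) ⊔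
        LinearMap.range (combination f g (m + 1 + g.totalDegree) (m + 1 + f.totalDegree)) := by
  have hinf : restrictTotalDegree (Fin 2) K (m + f.totalDegree + g.totalDegree) ⊓
      LinearMap.range (combination f g (m + 1 + g.totalDegree) (m + 1 + f.totalDegree)) =
      LinearMap.range (combination f g (m + g.totalDegree) (m + f.totalDegree)) := by
    apply le_antisymm
    · rintro p ⟨hp, hr⟩
      exact mem_range_combination_of_succ htop hg' hr
        ((mem_restrictTotalDegree _ _ _).mp hp)
    · exact le_inf (range_combination_le m) (range_combination_mono (by lia) (by lia))
  have hsum := Submodule.finrank_sup_add_finrank_inf_eq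
    (restrictTotalDegree (Fin 2) K (m + f.totalDegree + g.totalDegree))
    (LinearMap.range (combination f g (m + 1 + g.totalDegree) (m + 1 + f.totalDegree)))
  rw [hinf] at hsum
  have h0 := finrank_restrictTotalDegree_eq_add hfg hg m
  have h1 := finrank_restrictTotalDegree_eq_add hfg hg (m + 1)
  refine (Submodule.eq_of_le_of_finrank_eq (sup_le ?_ (range_combination_le _)) (by lia)).ge
  intro p hp
  rw [mem_restrictTotalDegree] at hp ⊢
  lia

theorem restrictTotalDegree_sup_span (hg : g ≠ 0) (hfg : IsRelPrime f g)
    (htop : IsRelPrime (homogeneousComponent f.totalDegree f)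
      (homogeneousComponent g.totalDegree g))
    (hg' : homogeneousComponent g.totalDegree g ≠ 0) :
    restrictTotalDegree (Fin 2) K (f.totalDegree + g.totalDegree) ⊔
      (Ideal.span {f, g}).restrictScalars K = ⊤ := by
  have key (m : ℕ) : restrictTotalDegree (Fin 2) K (m + f.totalDegree + g.totalDegree) ≤
      restrictTotalDegree (Fin 2) K (f.totalDegree + g.totalDegree) ⊔
        (Ideal.span {f, g}).restrictScalars K := by
    induction m with
    | zero => simp
    | succ m ih =>
      exact (restrictTotalDegree_succ_le hg hfg htop hg' m).trans
        (sup_le ih ((range_combination_le_span _ _).trans le_sup_right))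
  refine eq_top_iff.mpr fun p _ ↦ key p.totalDegree ?_
  rw [mem_restrictTotalDegree]
  lia

theorem finite_and_finrank_quotient_span_pair (hg : g ≠ 0) (hfg : IsRelPrime f g)
    (htop : IsRelPrime (homogeneousComponent f.totalDegree f)
      (homogeneousComponent g.totalDegree g))
    (hg' : homogeneousComponent g.totalDegree g ≠ 0) :
    Module.Finite K (MvPolynomial (Fin 2) K ⧸ Ideal.span {f, g}) ∧
      Module.finrank K (MvPolynomial (Fin 2) K ⧸ Ideal.span {f, g}) =
        f.totalDegree * g.totalDegree := by
  let V := restrictTotalDegree (Fin 2) K (f.totalDegree + g.totalDegree)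
  let π : V →ₗ[K] MvPolynomial (Fin 2) K ⧸ Ideal.span {f, g} :=
    (Ideal.Quotient.mkₐ K (Ideal.span {f, g})).toLinearMap ∘ₗ V.subtype
  have hsurj : Function.Surjective π := by
    intro q
    obtain ⟨p, rfl⟩ := Ideal.Quotient.mk_surjective q
    obtain ⟨v, hv, i, hi, rfl⟩ := Submodule.mem_sup.mp
      ((restrictTotalDegree_sup_span hg hfg htop hg').ge (Submodule.mem_top (x := p)))
    refine ⟨⟨v, hv⟩, (Ideal.Quotient.mk_eq_mk_iff_sub_mem _ _).mpr ?_⟩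
    change v - (v + i) ∈ Ideal.span {f, g}
    rw [sub_add_cancel_left]
    exact neg_mem hi
  have hker : (LinearMap.ker π).map V.subtype =
      LinearMap.range (combination f g g.totalDegree f.totalDegree) := by
    rw [← restrictTotalDegree_inf_span htop hg']
    ext p
    simp only [Submodule.mem_map, LinearMap.mem_ker, Submodule.mem_inf,
      Submodule.restrictScalars_mem]
    constructor
    · rintro ⟨v, hv, rfl⟩
      exact ⟨v.2, Ideal.Quotient.eq_zero_iff_mem.mp hv⟩
    · rintro ⟨hp, hI⟩
      exact ⟨⟨p, hp⟩, Ideal.Quotient.eq_zero_iff_mem.mpr hI, rfl⟩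
  refine ⟨Module.Finite.of_surjective π hsurj, ?_⟩
  have hnull := LinearMap.finrank_range_add_finrank_ker π
  rw [LinearMap.range_eq_top.mpr hsurj, finrank_top,
    ← Submodule.finrank_map_subtype_eq V (LinearMap.ker π), hker] at hnull
  have hdim := finrank_restrictTotalDegree_eq_add hfg hg 0
  rw [zero_add, zero_add] at hdim
  exact Nat.add_left_cancel ((add_comm _ _).trans (hnull.trans hdim))

end Dimension

end MvPolynomial

theorem isLocalization_quotient_map {R S : Type*} [CommRing R] [CommRing S] [Algebra R S]
    (M : Submonoid R) [IsLocalization M S] (I : Ideal R) :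
    IsLocalization (M.map (Ideal.Quotient.mk I)) (S ⧸ I.map (algebraMap R S)) := by
  refine IsLocalization.of_surjective M S (Ideal.Quotient.mk I)
    Ideal.Quotient.mk_surjective (Ideal.Quotient.mk _) Ideal.Quotient.mk_surjective ?_ ?_
  · ext
    rfl
  · rw [Ideal.mk_ker, Ideal.mk_ker]

theorem isScalarTower_quotient_map (K : Type*) {R S : Type*} [CommRing K] [CommRing R] [CommRing S]
    [Algebra K R] [Algebra K S] [Algebra R S] [IsScalarTower K R S] (I : Ideal R) :
    IsScalarTower K (R ⧸ I) (S ⧸ I.map (algebraMap R S)) :=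
  .of_algebraMap_eq fun c ↦
    congrArg (Ideal.Quotient.mk _) (IsScalarTower.algebraMap_apply K R S c)

/-- The localization at `p` of the coordinate ring of the intersection computes the intersection
multiplicity. -/
theorem interMult_eq_rank (L : Type) [Field L] (f g : MvPolynomial (Fin 2) L) (p : L × L)
    (P : Ideal (MvPolynomial (Fin 2) L ⧸ Ideal.span {f, g})) [P.IsPrime]
    (hP : P.comap (Ideal.Quotient.mk _) = ptIdeal L p) :
    interMult L f g p = Module.rank L (Localization.AtPrime P) := by
  have hprime : (ptIdeal L p).IsPrime := (ptIdeal_isMaximal L p).isPrime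
  have hM : (ptIdeal L p).primeCompl.map (Ideal.Quotient.mk (Ideal.span {f, g})) =
      P.primeCompl := by
    ext x
    obtain ⟨y, rfl⟩ := Ideal.Quotient.mk_surjective x
    constructor
    · rintro ⟨z, hz, hzy⟩ hy
      rw [← hzy] at hy
      exact hz (hP.le hy)
    · intro hy
      exact ⟨y, fun h ↦ hy (hP.ge h), rfl⟩
  have hloc := isLocalization_quotient_map (S := Localization.AtPrime (ptIdeal L p))
    (ptIdeal L p).primeCompl (Ideal.span {f, g})
  rw [hM] at hloc
  unfold interMult
  rw [← Set.image_pair, ← Ideal.map_span]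
  let ψ := IsLocalization.algEquiv P.primeCompl (Localization.AtPrime P)
    (Localization.AtPrime (ptIdeal L p) ⧸
      (Ideal.span {f, g}).map (algebraMap _ (Localization.AtPrime (ptIdeal L p))))
  have : IsScalarTower L (MvPolynomial (Fin 2) L ⧸ Ideal.span {f, g})
      (Localization.AtPrime (ptIdeal L p) ⧸
        (Ideal.span {f, g}).map (algebraMap _ (Localization.AtPrime (ptIdeal L p)))) :=
    isScalarTower_quotient_map L _
  exact (ψ.restrictScalars L).toLinearEquiv.rank_eq.symm

/-- Maximal ideals of `L[x,y]` over an algebraically closed field are the ideals of points. -/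
theorem exists_eq_ptIdeal {L : Type} [Field L] [IsAlgClosed L] {I : Ideal (MvPolynomial (Fin 2) L)}
    (hI : I.IsMaximal) : ∃ p : L × L, I = ptIdeal L p := by
  obtain ⟨x, hx⟩ := isMaximal_iff_eq_vanishingIdeal_singleton.mp hI
  refine ⟨(x 0, x 1), ?_⟩
  have hvec : ![x 0, x 1] = x := by ext i; fin_cases i <;> rfl
  ext q
  simp [hx, ptIdeal, hvec]

theorem ptIdeal_injective (L : Type) [Field L] : Function.Injective (ptIdeal L) := by
  intro p q hpq
  have h (i : Fin 2) : ![p.1, p.2] i = ![q.1, q.2] i := by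
    have hmem : X i - C (![p.1, p.2] i) ∈ ptIdeal L q := by
      rw [← hpq]; simp [ptIdeal]
    have : ![q.1, q.2] i - ![p.1, p.2] i = 0 := by simpa [ptIdeal] using hmem
    exact (sub_eq_zero.mp this).symm
  exact Prod.ext (h 0) (h 1)

theorem span_pair_le_ptIdeal_iff {L : Type} [Field L] {f g : MvPolynomial (Fin 2) L} {p : L × L} :
    Ideal.span {f, g} ≤ ptIdeal L p ↔ eval ![p.1, p.2] f = 0 ∧ eval ![p.1, p.2] g = 0 := by
  rw [Ideal.span_le, Set.pair_subset_iff]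
  rfl

/-- The points of the intersection of two plane curves correspond to the primes of its coordinate
ring, when the latter is finite over the base field. -/
theorem exists_equiv_primeSpectrum {L : Type} [Field L] [IsAlgClosed L]
    {f g : MvPolynomial (Fin 2) L} [IsArtinianRing (MvPolynomial (Fin 2) L ⧸ Ideal.span {f, g})] :
    ∃ φ : PrimeSpectrum (MvPolynomial (Fin 2) L ⧸ Ideal.span {f, g}) ≃
        {p : L × L | eval ![p.1, p.2] f = 0 ∧ eval ![p.1, p.2] g = 0},
      ∀ P, P.asIdeal.comap (Ideal.Quotient.mk _) = ptIdeal L (φ P) := by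
  have hex (P : PrimeSpectrum (MvPolynomial (Fin 2) L ⧸ Ideal.span {f, g})) :
      ∃ p : {p : L × L | eval ![p.1, p.2] f = 0 ∧ eval ![p.1, p.2] g = 0},
        P.asIdeal.comap (Ideal.Quotient.mk _) = ptIdeal L p := by
    have : P.asIdeal.IsMaximal := IsArtinianRing.isMaximal_of_isPrime P.asIdeal
    obtain ⟨p, hp⟩ := exists_eq_ptIdeal
      (Ideal.comap_isMaximal_of_surjective _ (Ideal.Quotient.mk_surjective) (K := P.asIdeal))
    refine ⟨⟨p, span_pair_le_ptIdeal_iff.mp ?_⟩, hp⟩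
    rw [← hp]
    exact Ideal.mk_ker.symm.trans_le (Ideal.ker_le_comap _)
  choose φ hφ using hex
  refine ⟨Equiv.ofBijective φ ⟨fun P Q hPQ ↦ ?_, fun p ↦ ?_⟩, hφ⟩
  · exact PrimeSpectrum.ext (Ideal.comap_injective_of_surjective _ Ideal.Quotient.mk_surjective
      ((hφ P).trans (hPQ ▸ (hφ Q).symm)))
  · have hmax := ptIdeal_isMaximal L p
    have hle : Ideal.span {f, g} ≤ ptIdeal L p := span_pair_le_ptIdeal_iff.mpr p.2
    have hcomap : ((ptIdeal L p).map (Ideal.Quotient.mk (Ideal.span {f, g}))).comap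
        (Ideal.Quotient.mk _) = ptIdeal L p := by
      rw [Ideal.comap_map_of_surjective' _ Ideal.Quotient.mk_surjective, Ideal.mk_ker,
        sup_eq_left.mpr hle]
    have hprime : ((ptIdeal L p).map (Ideal.Quotient.mk (Ideal.span {f, g}))).IsPrime := by
      have := hmax.isPrime
      exact Ideal.map_isPrime_of_surjective Ideal.Quotient.mk_surjective (by rwa [Ideal.mk_ker])
    exact ⟨⟨_, hprime⟩, Subtype.ext (ptIdeal_injective L ((hφ _).symm.trans hcomap))⟩

/-- **Non-standard Bezout theorem** (affine form): if `f, g ∈ L[x,y]` are nonconstant of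
total degrees `d` and `e`, and their top-degree homogeneous components have no common zero
in `L² \ {0}` (no common point at infinity), then the curves `f = 0` and `g = 0` meet in
finitely many points and the sum of the intersection multiplicities is `d·e`. -/
theorem nonstandard_bezout (L : Type) [Field L] [IsAlgClosed L]
    (f g : MvPolynomial (Fin 2) L) (d e : ℕ) (hd : f.totalDegree = d) (he : g.totalDegree = e)
    (hd1 : 0 < d) (he1 : 0 < e)
    (hinf : ∀ x y : L, ¬(x = 0 ∧ y = 0) →
      ¬(eval ![x, y] (homogeneousComponent d f) = 0 ∧
        eval ![x, y] (homogeneousComponent e g) = 0)) :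
    ∃ hfin : {p : L × L | eval ![p.1, p.2] f = 0 ∧ eval ![p.1, p.2] g = 0}.Finite,
      ∑ p ∈ hfin.toFinset, interMult L f g p = (d : Cardinal) * (e : Cardinal) := by
  subst hd he
  have htop_ne {h : MvPolynomial (Fin 2) L} (hpos : 0 < h.totalDegree) :
      homogeneousComponent h.totalDegree h ≠ 0 := fun h0 ↦ by
    obtain ⟨n, hn⟩ := Nat.exists_eq_add_one_of_ne_zero hpos.ne'
    rw [hn] at h0
    have := totalDegree_le_of_homogeneousComponent_eq_zero hn.le h0
    lia
  have hne {h : MvPolynomial (Fin 2) L} (hpos : 0 < h.totalDegree) : h ≠ 0 := fun h0 ↦ by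
    simp [h0] at hpos
  have hdeg {h : MvPolynomial (Fin 2) L} (hpos : 0 < h.totalDegree) :
      (homogeneousComponent h.totalDegree h).totalDegree = h.totalDegree :=
    (homogeneousComponent_isHomogeneous _ h).totalDegree (htop_ne hpos)
  have htop : IsRelPrime (homogeneousComponent f.totalDegree f)
      (homogeneousComponent g.totalDegree g) := by
    refine isRelPrime_of_top_forms (htop_ne hd1) (htop_ne he1) ?_
    rwa [hdeg hd1, hdeg he1, homogeneousComponent_eq_self (homogeneousComponent_isHomogeneous _ _),
      homogeneousComponent_eq_self (homogeneousComponent_isHomogeneous _ _)]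
  obtain ⟨hfinite, hrank⟩ := finite_and_finrank_quotient_span_pair (hne he1)
    (isRelPrime_of_top_forms (hne hd1) (hne he1) hinf) htop (htop_ne he1)
  have : IsArtinianRing (MvPolynomial (Fin 2) L ⧸ Ideal.span {f, g}) := .of_finite L _
  obtain ⟨φ, hφ⟩ := exists_equiv_primeSpectrum (f := f) (g := g)
  have hfin := Set.finite_coe_iff.mp (Finite.of_equiv _ φ)
  let := Fintype.ofFinite (PrimeSpectrum (MvPolynomial (Fin 2) L ⧸ Ideal.span {f, g}))
  let := hfin.fintype
  refine ⟨hfin, ?_⟩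
  rw [← Nat.cast_mul, ← hrank, IsArtinianRing.finrank_eq_sum_primeSpectrum _ L, Nat.cast_sum,
    Finset.sum_subtype hfin.toFinset (fun p ↦ hfin.mem_toFinset), ← φ.sum_comp]
  refine Finset.sum_congr rfl fun P _ ↦ ?_
  have : Module.Finite L (Localization.AtPrime P.asIdeal) :=
    Module.Finite.of_surjective (Algebra.algHom L _ (Localization.AtPrime P.asIdeal)).toLinearMap
      (IsArtinianRing.localization_surjective P.asIdeal.primeCompl _)
  rw [interMult_eq_rank L f g _ P.asIdeal (hφ P), Module.finrank_eq_rank]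
end

section
/- Let A be a commutative ring and B an étale A-algebra (formally étale and of finite presentation). Then for every prime ideal q of B there exist an element g ∈ B with g ∉ q, a monic polynomial f ∈ A[T], and a polynomial h ∈ A[T], such that the image of the derivative f′ is a unit in the localization ((A[T]/(f)))_{h̄} (where h̄ denotes the image of h in A[T]/(f)), and there is an A-algebra isomorphism B_g ≅ ((A[T]/(f)))_{h̄}. -/
universe u

/-- Local structure theorem for étale algebras (Fact 1.5): if `B` is an étale `A`-algebra,
then for every prime `q` of `B` there are `g ∈ B \ q`, a monic polynomial `f ∈ A[T]` and a
polynomial `h ∈ A[T]` such that `f'` becomes a unit in `((A[T]/(f)))_{h̄}` and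
`B_g ≅ ((A[T]/(f)))_{h̄}` as `A`-algebras (i.e. `B` is locally standard étale). -/
theorem etale_locally_standard_etale (A B : Type u) [CommRing A] [CommRing B] [Algebra A B]
    [Algebra.Etale A B] (q : Ideal B) [q.IsPrime] :
    ∃ (g : B) (f h : Polynomial A),
      g ∉ q ∧ f.Monic ∧
      IsUnit ((algebraMap (Polynomial A ⧸ Ideal.span {f})
          (Localization.Away (Ideal.Quotient.mk (Ideal.span {f}) h)))
          (Ideal.Quotient.mk (Ideal.span {f}) (Polynomial.derivative f))) ∧
      (letI : Algebra A (Localization.Away g) :=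
          ((algebraMap B (Localization.Away g)).comp (algebraMap A B)).toAlgebra
       letI : Algebra A (Localization.Away (Ideal.Quotient.mk (Ideal.span {f}) h)) :=
          ((algebraMap (Polynomial A ⧸ Ideal.span {f})
              (Localization.Away (Ideal.Quotient.mk (Ideal.span {f}) h))).comp
            (algebraMap A (Polynomial A ⧸ Ideal.span {f}))).toAlgebra
       Nonempty (Localization.Away g ≃ₐ[A]
          Localization.Away (Ideal.Quotient.mk (Ideal.span {f}) h))) := by
  have : Algebra.IsEtaleAt A q :=
    Algebra.FormallyEtale.comp A B (Localization.AtPrime q)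
  obtain ⟨g, hgq, ⟨⟨P⟩⟩⟩ := Algebra.IsEtaleAt.exists_isStandardEtale (R := A) q
  let e : Localization.Away g ≃ₐ[A] Localization.Away (AdjoinRoot.mk P.f P.g) :=
    P.equivRing.trans P.P.equivAwayAdjoinRoot
  refine ⟨g, P.f, P.g, hgq, P.monic_f, ?_,
    ⟨@AlgEquiv.ofRingEquiv _ _ _ _ _ _ (_) (_) e.toRingEquiv ?_⟩⟩
  · obtain ⟨p₁, p₂, n, hn⟩ := P.cond
    refine isUnit_of_dvd_unit ?_
      ((IsLocalization.Away.algebraMap_isUnit (Ideal.Quotient.mk (Ideal.span {P.f}) P.g)).pow n)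
    rw [← map_pow, ← map_pow, ← hn]
    refine map_dvd _ ⟨Ideal.Quotient.mk _ p₁, ?_⟩
    rw [map_add, map_mul, map_mul, Ideal.Quotient.mk_singleton_self, zero_mul, add_zero]
  · intro a
    exact (congrArg e (IsScalarTower.algebraMap_apply A B (Localization.Away g) a).symm).trans
      ((e.commutes a).trans (IsScalarTower.algebraMap_apply A (AdjoinRoot P.f)
        (Localization.Away (AdjoinRoot.mk P.f P.g)) a))
end

section
/- Let L be an algebraically closed field and K an algebraically closed field extension of L. Let d, e ≥ 1, and let t ∈ L[X,Y,Z] be a nonzero squarefree homogeneous polynomial of degree e (defining a reduced projective plane curve). Let (u_α) be a family of elements of K, indexed by the monomials α of degree d in X, Y, Z, which is algebraically independent over L, and set s = ∑_α u_α·α ∈ K[X,Y,Z]. Then for every nonzero point p ∈ K³ with s(p) = 0 and t(p) = 0, the gradient vectors (∂s/∂X(p), ∂s/∂Y(p), ∂s/∂Z(p)) and (∂t/∂X(p), ∂t/∂Y(p), ∂t/∂Z(p)) are linearly independent over K. In particular, every intersection point of the curves s = 0 and t = 0 is a smooth point of both curves and the intersection there is transverse. -/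
open MvPolynomial

theorem MvPolynomial.not_dvd_pderiv {σ R : Type*} [CommRing R] [IsDomain R]
    {q : MvPolynomial σ R} {i : σ} (h : pderiv i q ≠ 0) : ¬ q ∣ pderiv i q := by
  rintro ⟨r, hr⟩
  have hq : q ≠ 0 := by rintro rfl; simp at h
  have hr0 : r ≠ 0 := by rintro rfl; simp [hr] at h
  have hdeg : ∀ m ∈ (pderiv i q).support, m i < q.degreeOf i := fun m hm ↦ by
    rw [mem_support_iff, coeff_pderiv] at hm
    have := monomial_le_degreeOf i (mem_support_iff.mpr (left_ne_zero_of_mul hm))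
    simp at this
    omega
  obtain ⟨m, hm⟩ := support_nonempty.mpr h
  have hlt := (degreeOf_lt_iff (Nat.zero_lt_of_lt (hdeg m hm))).mpr hdeg
  rw [hr, degreeOf_mul_eq hq hr0] at hlt
  omega

theorem Irreducible.exists_pderiv_ne_zero {σ k : Type*} [Field k] [PerfectField k]
    {q : MvPolynomial σ k} (hq : Irreducible q) : ∃ i, pderiv i q ≠ 0 := by
  classical
  by_contra! h
  obtain ⟨p, hp⟩ := CharP.exists k
  have hdvd : ∀ m ∈ q.support, ∀ i, p ∣ m i := fun m hm i ↦ by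
    rcases Nat.eq_zero_or_pos (m i) with h0 | hpos
    · simp [h0]
    have hle : Finsupp.single i 1 ≤ m := Finsupp.single_le_iff.mpr hpos
    have hc := congrArg (coeff (m - Finsupp.single i 1)) (h i)
    rw [coeff_pderiv, tsub_add_cancel_of_le hle, coeff_zero] at hc
    rw [← CharP.cast_eq_zero_iff k p]
    have := (mul_eq_zero.mp hc).resolve_left (mem_support_iff.mp hm)
    rw [← Nat.cast_succ] at this
    convert this using 2
    simp only [Finsupp.coe_tsub, Pi.sub_apply, Finsupp.single_eq_same]
    omega
  rcases CharP.char_is_prime_or_zero k p with hprime | rfl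
  · have : Fact p.Prime := ⟨hprime⟩
    have : ExpChar k p := .prime hprime
    have := PerfectField.toPerfectRing (K := k) p
    choose f hf using surjective_frobenius k p
    have hpow : (∑ m ∈ q.support, monomial (m.mapRange (· / p) (Nat.zero_div p))
        (f (coeff m q))) ^ p = q := by
      rw [sum_pow_char p]
      conv_rhs => rw [q.as_sum]
      refine Finset.sum_congr rfl fun m hm ↦ ?_
      have h1 : f (coeff m q) ^ p = coeff m q := hf _
      rw [monomial_pow, h1]
      congr
      ext i
      simp [Nat.mul_div_cancel' (hdvd m hm i)]
    exact not_irreducible_pow hprime.ne_one (hpow ▸ hq)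
  · have hC : q = C (coeff 0 q) := by
      ext m
      rw [coeff_C]
      split_ifs with h0
      · rw [← h0]
      · by_contra hm
        exact h0 (Finsupp.ext fun i ↦ (zero_dvd_iff.mp (hdvd m (mem_support_iff.mpr hm) i)).symm)
    rw [hC] at hq
    have hne : coeff 0 q ≠ 0 := fun h0 ↦ hq.ne_zero (by rw [h0, C_0])
    exact hq.not_isUnit ((IsUnit.mk0 _ hne).map C)

/-- If an irreducible polynomial `q` vanishes at a point all of whose coordinates but the first are
algebraically independent, then it divides every polynomial vanishing there. -/
theorem Irreducible.dvd_of_aeval_eq_zero_of_algebraicIndependent_tail {k A : Type*} [Field k]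
    [CommRing A] [Algebra k A] {n : ℕ} {q g : MvPolynomial (Fin (n + 1)) k} (hq : Irreducible q)
    {P : Fin (n + 1) → A} (hqP : aeval P q = 0) (hgP : aeval P g = 0)
    (hP : AlgebraicIndependent k (Fin.tail P)) : q ∣ g := by
  by_contra hqg
  set Q := finSuccEquiv k n q
  have hQirr : Irreducible Q := hq.map (finSuccEquiv k n)
  have : IsDomain (AdjoinRoot Q) := AdjoinRoot.isDomain_of_prime hQirr.prime
  let : Algebra (MvPolynomial (Fin n) k) A := (aeval (Fin.tail P)).toRingHom.toAlgebra
  have hev : ∀ f, Polynomial.aeval (P 0) (finSuccEquiv k n f) = aeval P f := fun f ↦ by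
    induction f using MvPolynomial.induction_on with
    | C a => simp [finSuccEquiv_apply, RingHom.algebraMap_toAlgebra]
    | add f g hf hg => simp [hf, hg]
    | mul_X f i hf =>
      rw [map_mul, map_mul, map_mul, hf]
      congr 1
      induction i using Fin.cases with
      | zero => simp [finSuccEquiv_X_zero]
      | succ i => simp [finSuccEquiv_X_succ, RingHom.algebraMap_toAlgebra, Fin.tail]
  have hg0 : AdjoinRoot.mk Q (finSuccEquiv k n g) ≠ 0 := fun h ↦
    hqg ((map_dvd_iff (finSuccEquiv k n)).mp (AdjoinRoot.mk_eq_zero.mp h))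
  have halg : IsAlgebraic (MvPolynomial (Fin n) k) (AdjoinRoot.root Q) :=
    ⟨Q, hQirr.ne_zero, by simp [AdjoinRoot.aeval_eq]⟩
  have htop : Subalgebra.algebraicClosure (MvPolynomial (Fin n) k) (AdjoinRoot Q) = ⊤ := by
    rw [eq_top_iff, ← AdjoinRoot.adjoinRoot_eq_top]
    exact Algebra.adjoin_le (Set.singleton_subset_iff.mpr halg)
  have hmem : AdjoinRoot.mk Q (finSuccEquiv k n g) ∈
      Subalgebra.algebraicClosure (MvPolynomial (Fin n) k) (AdjoinRoot Q) := htop ▸ trivial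
  obtain ⟨r, hr0, w, hw⟩ := IsAlgebraic.exists_nonzero_dvd
    ((Subalgebra.mem_algebraicClosure ..).mp hmem) (mem_nonZeroDivisors_of_ne_zero hg0)
  let φ : AdjoinRoot Q →ₐ[MvPolynomial (Fin n) k] A :=
    AdjoinRoot.liftAlgHom Q (Algebra.ofId _ _) (P 0) (by
      have := hev q
      rw [hqP, Polynomial.aeval_def] at this
      exact this)
  have hφ := congrArg φ hw
  have hφg : φ (AdjoinRoot.mk Q (finSuccEquiv k n g)) = 0 := by
    rw [← AdjoinRoot.aeval_eq, ← Polynomial.aeval_algHom_apply]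
    rw [show φ (AdjoinRoot.root Q) = P 0 from AdjoinRoot.liftAlgHom_root .., hev, hgP]
  rw [map_mul, hφg, zero_mul, AlgHom.commutes] at hφ
  exact hr0 (hP (by rw [map_zero]; exact hφ))

theorem Irreducible.dvd_of_aeval_eq_zero_of_algebraicIndependent {k A : Type*} [Field k]
    [CommRing A] [Algebra k A] {q g : MvPolynomial (Fin 3) k} (hq : Irreducible q)
    {P : Fin 3 → A} (hqP : aeval P q = 0) (hgP : aeval P g = 0) {a b : Fin 3} (hab : a ≠ b)
    (hP : AlgebraicIndependent k ![P a, P b]) : q ∣ g := by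
  obtain ⟨σ, rfl, rfl⟩ : ∃ σ : Equiv.Perm (Fin 3), σ 1 = a ∧ σ 2 = b := by
    clear hP
    revert a b
    decide
  have hren : ∀ f, aeval (P ∘ σ) (renameEquiv k σ.symm f) = aeval P f := fun f ↦ by
    rw [renameEquiv_apply, aeval_rename, Function.comp_assoc, Equiv.self_comp_symm,
      Function.comp_id]
  rw [← map_dvd_iff (renameEquiv k σ.symm)]
  refine dvd_of_aeval_eq_zero_of_algebraicIndependent_tail (P := P ∘ σ)
    (hq.map (renameEquiv k σ.symm)) ((hren q).trans hqP) ((hren g).trans hgP) ?_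
  convert hP using 1
  ext i
  fin_cases i <;> rfl

/-- At a singular point of a reduced hypersurface over a perfect field, two polynomials without
common factor vanish. -/
theorem Squarefree.exists_irreducible_aeval_eq_zero {k A σ : Type*} [Field k] [PerfectField k]
    [CommRing A] [IsDomain A] [Algebra k A] {t : MvPolynomial σ k}
    (ht0 : t ≠ 0) (ht : Squarefree t) {P : σ → A} (htP : aeval P t = 0)
    (hsing : ∀ i, aeval P (pderiv i t) = 0) :
    ∃ q g : MvPolynomial σ k, Irreducible q ∧ ¬ q ∣ g ∧ aeval P q = 0 ∧ aeval P g = 0 := by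
  have hker := RingHom.ker_isPrime (aeval (R := k) P).toRingHom
  obtain ⟨w, hw⟩ := UniqueFactorizationMonoid.factors_prod ht0
  have hmem : (UniqueFactorizationMonoid.factors t).prod ∈
      RingHom.ker (aeval (R := k) P).toRingHom := by
    have h1 : (UniqueFactorizationMonoid.factors t).prod * w ∈
        RingHom.ker (aeval (R := k) P).toRingHom := by rw [hw]; exact htP
    exact (hker.mem_or_mem h1).resolve_right fun h ↦
      hker.ne_top (Ideal.eq_top_of_isUnit_mem _ h w.isUnit)
  obtain ⟨q, hqt, hqP⟩ := (hker.multiset_prod_mem_iff_exists_mem _).mp hmem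
  replace hqP : aeval P q = 0 := hqP
  have hq := UniqueFactorizationMonoid.irreducible_of_factor q hqt
  obtain ⟨m, rfl⟩ := UniqueFactorizationMonoid.dvd_of_mem_factors hqt
  obtain ⟨i, hi⟩ := hq.exists_pderiv_ne_zero
  refine ⟨q, pderiv i q * m, hq, fun h ↦ ?_, hqP, ?_⟩
  · rcases hq.prime.dvd_or_dvd h with h | h
    · exact not_dvd_pderiv hi h
    · exact hq.not_isUnit (ht q (mul_dvd_mul_left q h))
  · have := hsing i
    rwa [pderiv_mul, map_add, map_mul _ q, hqP, zero_mul, add_zero] at this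

theorem MvPolynomial.IsHomogeneous.aeval_mul_left {σ R A : Type*} [CommSemiring R] [CommSemiring A]
    [Algebra R A] {f : MvPolynomial σ R} {n : ℕ} (hf : f.IsHomogeneous n) (a : A) (b : σ → A) :
    MvPolynomial.aeval (fun i ↦ a * b i) f = a ^ n * MvPolynomial.aeval b f := by
  rw [MvPolynomial.aeval_def, MvPolynomial.aeval_def, MvPolynomial.eval₂_eq,
    MvPolynomial.eval₂_eq, Finset.mul_sum]
  refine Finset.sum_congr rfl fun m hm ↦ ?_
  have hdeg : ∑ i ∈ m.support, m i = n := by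
    rw [← hf (mem_support_iff.mp hm)]
    exact DFunLike.congr_fun Finsupp.degree_eq_weight_one m
  rw [Finset.prod_congr rfl fun i _ ↦ mul_pow a (b i) (m i), Finset.prod_mul_distrib,
    Finset.prod_pow_eq_pow_sum, hdeg]
  ring

theorem MvPolynomial.exists_eval_ne_zero_and_ne_zero {σ k : Type*} [Field k] [Infinite k]
    {f : MvPolynomial σ k} (hf : f ≠ 0) (i : σ) : ∃ v : σ → k, v i ≠ 0 ∧ eval v f ≠ 0 := by
  by_contra! h
  refine mul_ne_zero (X_ne_zero i) hf (MvPolynomial.funext fun v ↦ ?_)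
  by_cases hv : v i = 0
  · simp [hv]
  · simp [h v hv]

theorem Transcendental.algebraicIndependent_X_X_mul_C {k K : Type*} [Field k] [Infinite k]
    [Field K] [Algebra k K] {y : K} (hy : Transcendental k y) :
    AlgebraicIndependent k ![(Polynomial.X : Polynomial K), Polynomial.X * Polynomial.C y] := by
  rw [algebraicIndependent_iff]
  intro r hr
  by_contra hr0
  obtain ⟨v, hv0, hv⟩ := exists_eval_ne_zero_and_ne_zero hr0 0
  let h : Polynomial k :=
    MvPolynomial.aeval ![Polynomial.C (v 0), Polynomial.C (v 0) * Polynomial.X] r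
  have hy0 : Polynomial.aeval y h = 0 := by
    have := congrArg (Polynomial.aeval (R := K) (algebraMap k K (v 0))) hr
    rw [map_zero] at this
    rw [← this]
    change ((Polynomial.aeval y).comp (MvPolynomial.aeval _)) r =
      (((Polynomial.aeval (R := K) _).restrictScalars k).comp (MvPolynomial.aeval _)) r
    congr 1
    ext i
    fin_cases i <;> simp [mul_comm y]
  have h0 : h = 0 := by
    by_contra hne
    exact hy ⟨h, hne, hy0⟩
  apply hv
  have := congrArg (Polynomial.aeval (v 1 / v 0)) h0
  rw [map_zero] at this
  rw [← this, ← AlgHom.comp_apply, ← aeval_eq_eval]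
  congr 1
  ext i
  fin_cases i <;> simp [mul_div_cancel₀ _ hv0]

theorem AlgebraicIndependent.exists_intermediateField_eq_matroid_closure (k K : Type*) [Field k]
    [Field K] [Algebra k K] (S : Set K) :
    ∃ A : IntermediateField k K, (A : Set K) = (matroid k K).closure S := by
  refine ⟨⟨(Subalgebra.algebraicClosure (Algebra.adjoin k S) K).restrictScalars k,
    fun x hx ↦ ?_⟩, matroid_closure_eq.symm⟩
  exact IsAlgebraic.inv hx

theorem AlgebraicIndependent.mem_matroid_closure_of_isAlgebraic {k K : Type*} [Field k]
    [Field K] [Algebra k K] {S : Set K} {y : K} (hy : IsAlgebraic k y) :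
    y ∈ (matroid k K).closure S := by
  rw [matroid_closure_eq]
  exact hy.extendScalars (FaithfulSMul.algebraMap_injective k (Algebra.adjoin k S))

/-- Points of a plane curve, normalized to have a coordinate `1`, have transcendence degree at
most one. -/
theorem MvPolynomial.IsHomogeneous.exists_forall_mem_matroid_closure_singleton
    {k K : Type*} [Field k] [Infinite k] [Field K] [Algebra k K] {t : MvPolynomial (Fin 3) k}
    {e : ℕ} (ht : t.IsHomogeneous e) (ht0 : t ≠ 0) {p : Fin 3 → K} {i : Fin 3} (hpi : p i = 1)
    (htp : MvPolynomial.aeval p t = 0) :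
    ∃ x, ∀ l, p l ∈ (AlgebraicIndependent.matroid k K).closure {x} := by
  obtain ⟨j, l, hij, hil, hjl, hall⟩ : ∃ j l : Fin 3, j ≠ i ∧ l ≠ i ∧ l ≠ j ∧
      ∀ m, m = i ∨ m = j ∨ m = l := by
    clear hpi
    revert i
    decide
  have hself : ∀ x : K, x ∈ (AlgebraicIndependent.matroid k K).closure {x} := fun x ↦
    Matroid.mem_closure_of_mem' _ (Set.mem_singleton x)
  have hone : ∀ x : K, p i ∈ (AlgebraicIndependent.matroid k K).closure {x} := fun x ↦
    AlgebraicIndependent.mem_matroid_closure_of_isAlgebraic (hpi ▸ isAlgebraic_one)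
  by_cases hj : IsAlgebraic k (p j)
  · refine ⟨p l, fun m ↦ ?_⟩
    rcases hall m with h | h | h <;> rw [h]
    · exact hone _
    · exact AlgebraicIndependent.mem_matroid_closure_of_isAlgebraic hj
    · exact hself _
  refine ⟨p j, fun m ↦ ?_⟩
  rcases hall m with h | h | h <;> rw [h]
  · exact hone _
  · exact hself _
  obtain ⟨v, hv0, hv⟩ := exists_eval_ne_zero_and_ne_zero ht0 i
  wlog hvi : v i = 1 generalizing v
  · refine this (fun m ↦ (v i)⁻¹ * v m) (by simp [hv0]) ?_ (inv_mul_cancel₀ hv0)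
    have := ht.aeval_mul_left (v i)⁻¹ v
    rw [aeval_eq_eval, aeval_eq_eval] at this
    rw [this]
    exact mul_ne_zero (pow_ne_zero _ (inv_ne_zero hv0)) hv
  rw [AlgebraicIndependent.matroid_closure_eq]
  let y : Algebra.adjoin k {p j} := ⟨p j, Algebra.self_mem_adjoin_singleton k (p j)⟩
  let H : Polynomial (Algebra.adjoin k {p j}) := MvPolynomial.aeval
    (fun m ↦ if m = i then 1 else if m = j then Polynomial.C y else Polynomial.X) t
  refine ⟨H, fun hH ↦ ?_, ?_⟩
  · let h : Polynomial k := MvPolynomial.aeval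
      (fun m ↦ if m = i then 1 else if m = j then Polynomial.X else Polynomial.C (v l)) t
    have hy : Polynomial.aeval (p j) h = 0 := by
      have := congrArg (Polynomial.aeval (algebraMap k K (v l))) hH
      rw [map_zero] at this
      rw [← this]
      change ((Polynomial.aeval (p j)).comp (MvPolynomial.aeval _)) t =
        (((Polynomial.aeval _).restrictScalars k).comp (MvPolynomial.aeval _)) t
      congr 1
      ext m
      rcases hall m with h | h | h <;> simp [h, hij, hil, hjl, y]
    have h0 : h = 0 := by
      by_contra hne
      exact hj ⟨h, hne, hy⟩
    apply hv
    have := congrArg (Polynomial.aeval (v j)) h0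
    rw [map_zero] at this
    rw [← this, ← AlgHom.comp_apply, ← aeval_eq_eval]
    congr 1
    ext m
    rcases hall m with h | h | h <;> simp [h, hij, hil, hjl, hvi]
  · rw [← htp, ← AlgHom.restrictScalars_apply k, ← AlgHom.comp_apply]
    congr 1
    ext m
    rcases hall m with h | h | h <;> simp [h, hij, hil, hjl, hpi, y]

theorem IntermediateField.coeff_mem_of_linearMap_eq_zero {k K σ : Type*} [Field k] [Field K]
    [Algebra k K] (A : IntermediateField k K) (s : MvPolynomial σ K) (φ : MvPolynomial σ K →ₗ[K] K)
    (hφ : φ s = 0) (γ : σ →₀ ℕ) (hγ : φ (monomial γ 1) ∈ A) (hγ0 : φ (monomial γ 1) ≠ 0)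
    (h : ∀ α ≠ γ, coeff α s * φ (monomial α 1) ∈ A) : coeff γ s ∈ A := by
  classical
  have hsum : ∑ α ∈ insert γ s.support, coeff α s * φ (monomial α 1) = 0 := by
    rw [← hφ]
    conv_rhs => rw [s.as_sum, map_sum]
    rw [Finset.sum_subset (Finset.subset_insert γ s.support)]
    · refine Finset.sum_congr rfl fun α _ ↦ ?_
      rw [← smul_eq_mul, ← map_smul, smul_monomial, smul_eq_mul, mul_one]
    · intro α _ hα
      rw [notMem_support_iff.mp hα, monomial_zero, map_zero]
  rw [← Finset.add_sum_erase _ _ (Finset.mem_insert_self γ _)] at hsum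
  have hmem : coeff γ s * φ (monomial γ 1) ∈ A := by
    rw [eq_neg_of_add_eq_zero_left hsum]
    exact neg_mem (sum_mem fun α hα ↦ h α (Finset.ne_of_mem_erase hα))
  rw [← mul_div_cancel_right₀ (coeff γ s) hγ0]
  exact div_mem hmem hγ

/-- The singular points of a reduced plane curve are algebraic over the field of definition. -/
theorem MvPolynomial.IsHomogeneous.isAlgebraic_of_forall_aeval_pderiv_eq_zero
    {k K : Type*} [Field k] [Infinite k] [PerfectField k] [Field K] [Algebra k K]
    {t : MvPolynomial (Fin 3) k} {e : ℕ} (ht : t.IsHomogeneous e) (ht0 : t ≠ 0)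
    (htsf : Squarefree t) {p : Fin 3 → K} {i : Fin 3} (hpi : p i = 1)
    (htp : MvPolynomial.aeval p t = 0) (hsing : ∀ m, MvPolynomial.aeval p (pderiv m t) = 0)
    (j : Fin 3) : IsAlgebraic k (p j) := by
  by_contra hj
  have hij : i ≠ j := by
    rintro rfl
    exact hj (hpi ▸ isAlgebraic_one)
  let P : Fin 3 → Polynomial K := fun m ↦ Polynomial.X * Polynomial.C (p m)
  have hP : ∀ (f : MvPolynomial (Fin 3) k) (n : ℕ), f.IsHomogeneous n →
      MvPolynomial.aeval p f = 0 → MvPolynomial.aeval P f = 0 := fun f n hf hfp ↦ by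
    have h := MvPolynomial.aeval_algebraMap_apply (Polynomial K) p f
    rw [hfp, map_zero] at h
    rw [hf.aeval_mul_left]
    exact mul_eq_zero_of_right _ h
  obtain ⟨q, g, hq, hqg, hqP, hgP⟩ := htsf.exists_irreducible_aeval_eq_zero ht0 (hP t e ht htp)
    fun m ↦ hP _ _ ht.pderiv (hsing m)
  refine hqg (hq.dvd_of_aeval_eq_zero_of_algebraicIndependent hqP hgP hij ?_)
  have := Transcendental.algebraicIndependent_X_X_mul_C hj
  simpa only [P, hpi, Polynomial.C_1, mul_one] using this

theorem IntermediateField.aeval_mem {k K σ : Type*} [Field k] [Field K] [Algebra k K]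
    (A : IntermediateField k K) {p : σ → K} (hp : ∀ i, p i ∈ A) (f : MvPolynomial σ k) :
    aeval p f ∈ A := by
  have h : aeval p f ∈ Algebra.adjoin k (Set.range p) := by
    rw [Algebra.adjoin_range_eq_range_aeval]
    exact ⟨f, rfl⟩
  exact Algebra.adjoin_le (S := A.toSubalgebra) (Set.range_subset_iff.mpr hp) h

section GenericForm

variable {k K : Type*} [Field k] [Field K] [Algebra k K] {d : ℕ} {s : MvPolynomial (Fin 3) K}

open AlgebraicIndependent

/-- The coefficients of a form of degree `d` in three variables. -/
def formCoeff (d : ℕ) (s : MvPolynomial (Fin 3) K) :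
    {α : Fin 3 →₀ ℕ // α 0 + α 1 + α 2 = d} → K :=
  fun α ↦ s.coeff (α : Fin 3 →₀ ℕ)

theorem MvPolynomial.IsHomogeneous.exists_formCoeff_eq (hs : s.IsHomogeneous d)
    {α : Fin 3 →₀ ℕ} (hα : coeff α s ≠ 0) : ∃ a, a.1 = α ∧ formCoeff d s a = coeff α s := by
  refine ⟨⟨α, ?_⟩, rfl, rfl⟩
  rw [← Fin.sum_univ_three, ← Finsupp.degree_eq_sum, Finsupp.degree_eq_weight_one]
  exact hs hα

theorem AlgebraicIndependent.not_forall_mem_matroid_closure (hs : s.IsHomogeneous d)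
    (hgen : AlgebraicIndependent k (formCoeff d s)) {p : Fin 3 → K} (hsp : eval p s = 0)
    {i : Fin 3} (hpi : p i = 1) (δ : {α : Fin 3 →₀ ℕ // α 0 + α 1 + α 2 = d})
    (hδ : δ.1 = Finsupp.single i d) :
    ¬ ∀ m, p m ∈ (matroid k K).closure (Set.range (formCoeff d s) \ {formCoeff d s δ}) := by
  intro hp
  have hind : (matroid k K).Indep (Set.range (formCoeff d s)) := hgen.coe_range
  apply hind.notMem_closure_sdiff_of_mem (Set.mem_range_self δ)
  obtain ⟨A, hA⟩ := exists_intermediateField_eq_matroid_closure k K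
    (Set.range (formCoeff d s) \ {formCoeff d s δ})
  simp only [← hA, SetLike.mem_coe] at hp ⊢
  have hmon : ∀ α, eval p (monomial α 1) ∈ A := fun α ↦ by
    have := A.aeval_mem hp (monomial α 1)
    rwa [aeval_def, ← eval_map, map_monomial, map_one] at this
  refine A.coeff_mem_of_linearMap_eq_zero s (aeval p).toLinearMap (by simpa using hsp) δ.1
    (by simpa using hmon δ.1) (by simp [hδ, hpi, aeval_monomial]) fun α hα ↦ ?_
  by_cases h0 : coeff α s = 0
  · simp [h0]
  obtain ⟨a, rfl, ha⟩ := hs.exists_formCoeff_eq h0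
  refine mul_mem ?_ (by simpa using hmon a.1)
  rw [← SetLike.mem_coe, hA, ← ha]
  exact Matroid.mem_closure_of_mem' _ ⟨Set.mem_range_self a, fun h ↦
    hα (congrArg Subtype.val (hgen.injective h))⟩

/-- At a common zero of a reduced curve and a generic curve, some `2 × 2` minor of the Jacobian
matrix does not vanish. -/
theorem AlgebraicIndependent.exists_minor_ne_zero [Infinite k] [PerfectField k] {e : ℕ}
    {t : MvPolynomial (Fin 3) k} (ht0 : t ≠ 0) (htsf : Squarefree t) (ht : t.IsHomogeneous e)
    (hd : 1 ≤ d) (hs : s.IsHomogeneous d) (hgen : AlgebraicIndependent k (formCoeff d s))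
    {p : Fin 3 → K} {i : Fin 3} (hpi : p i = 1) (hsp : eval p s = 0) (htp : aeval p t = 0) :
    ∃ j l, eval p (pderiv j s) * aeval p (pderiv l t) -
      eval p (pderiv l s) * aeval p (pderiv j t) ≠ 0 := by
  by_contra! hminor
  let δ : {α : Fin 3 →₀ ℕ // α 0 + α 1 + α 2 = d} := ⟨Finsupp.single i d, by
    rw [← Fin.sum_univ_three, ← Finsupp.degree_eq_sum, Finsupp.degree_single]⟩
  by_cases hsing : ∀ m, aeval p (pderiv m t) = 0
  · exact not_forall_mem_matroid_closure hs hgen hsp hpi δ rfl fun m ↦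
      mem_matroid_closure_of_isAlgebraic
        (ht.isAlgebraic_of_forall_aeval_pderiv_eq_zero ht0 htsf hpi htp hsing m)
  obtain ⟨l, hli, hl⟩ : ∃ l ≠ i, aeval p (pderiv l t) ≠ 0 := by
    by_contra! h
    refine hsing fun m ↦ ?_
    by_cases hm : m = i
    · have := congrArg (aeval p) ht.sum_X_mul_pderiv
      rw [map_sum, Finset.sum_eq_single i (fun l _ hl ↦ by simp [h l hl]) (by simp)] at this
      simpa [hpi, htp, hm] using this
    · exact h m hm
  obtain ⟨j, hji, hjl⟩ : ∃ j, j ≠ i ∧ j ≠ l := by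
    clear hpi hl δ
    revert i l
    decide
  let γ : {α : Fin 3 →₀ ℕ // α 0 + α 1 + α 2 = d} :=
    ⟨Finsupp.single i (d - 1) + Finsupp.single j 1, by
      rw [← Fin.sum_univ_three, ← Finsupp.degree_eq_sum, map_add, Finsupp.degree_single,
        Finsupp.degree_single]
      omega⟩
  have hγδ : γ ≠ δ := fun h ↦ by
    have := DFunLike.congr_fun (congrArg Subtype.val h) j
    simp [γ, δ, hji] at this
  obtain ⟨x, hx⟩ := ht.exists_forall_mem_matroid_closure_singleton ht0 hpi htp
  have hind : (matroid k K).Indep (Set.range (formCoeff d s)) := hgen.coe_range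
  set S := (Set.range (formCoeff d s) \ {formCoeff d s δ}) \ {formCoeff d s γ} with hS
  have hγmem : formCoeff d s γ ∈ Set.range (formCoeff d s) \ {formCoeff d s δ} :=
    ⟨Set.mem_range_self γ, fun h ↦ hγδ (hgen.injective h)⟩
  have hγS : formCoeff d s γ ∉ (matroid k K).closure S :=
    (hind.subset Set.sdiff_subset).notMem_closure_sdiff_of_mem hγmem
  have hγx : formCoeff d s γ ∈ (matroid k K).closure (insert x S) := by
    obtain ⟨A, hA⟩ := exists_intermediateField_eq_matroid_closure k K (insert x S)
    have hpA : ∀ m, p m ∈ A := fun m ↦ by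
      rw [← SetLike.mem_coe, hA]
      exact (matroid k K).closure_subset_closure (by simp) (hx m)
    rw [← hA, SetLike.mem_coe]
    let φ : MvPolynomial (Fin 3) K →ₗ[K] K :=
      aeval p (pderiv l t) • ((aeval p).toLinearMap ∘ₗ (pderiv j).toLinearMap) -
        aeval p (pderiv j t) • ((aeval p).toLinearMap ∘ₗ (pderiv l).toLinearMap)
    have hφ : ∀ f, φ f = aeval p (pderiv l t) * eval p (pderiv j f) -
        aeval p (pderiv j t) * eval p (pderiv l f) := fun f ↦ by simp [φ]
    have hmon : ∀ α, φ (monomial α 1) ∈ A := fun α ↦ by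
      have h1 : ∀ m, eval p (pderiv m (monomial α 1)) ∈ A := fun m ↦ by
        have := A.aeval_mem hpA (pderiv m (monomial α 1))
        rwa [aeval_def, ← eval_map, ← pderiv_map, map_monomial, map_one] at this
      rw [hφ]
      exact sub_mem (mul_mem (A.aeval_mem hpA _) (h1 _)) (mul_mem (A.aeval_mem hpA _) (h1 _))
    have hφδ : φ (monomial δ.1 1) = 0 := by
      rw [hφ]
      simp [pderiv_monomial, δ, hji, hli]
    have hφγ : φ (monomial γ.1 1) = aeval p (pderiv l t) := by
      have hγj : γ.1 j = 1 := by simp [γ, hji]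
      have hγl : γ.1 l = 0 := by simp [γ, hli, hjl.symm]
      rw [hφ, pderiv_monomial, pderiv_monomial, hγj, hγl, add_tsub_cancel_right, eval_monomial,
        Finsupp.prod_single_index (by simp), hpi]
      simp
    refine A.coeff_mem_of_linearMap_eq_zero s φ ?_ γ.1 (hmon _) (hφγ ▸ hl) fun α hα ↦ ?_
    · rw [hφ, ← hminor j l]
      ring
    by_cases hαδ : α = δ.1
    · rw [hαδ, hφδ, mul_zero]
      exact zero_mem A
    by_cases h0 : coeff α s = 0
    · simp [h0]
    obtain ⟨a, rfl, ha⟩ := hs.exists_formCoeff_eq h0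
    refine mul_mem ?_ (hmon a.1)
    rw [← SetLike.mem_coe, hA, ← ha]
    exact Matroid.mem_closure_of_mem' _ (.inr ⟨⟨Set.mem_range_self a, fun h ↦
      hαδ (congrArg Subtype.val (hgen.injective h))⟩, fun h ↦
      hα (congrArg Subtype.val (hgen.injective h))⟩)
  have hxγ := Matroid.mem_closure_insert hγS hγx
  rw [hS, Set.insert_sdiff_singleton, Set.insert_eq_of_mem hγmem] at hxγ
  exact not_forall_mem_matroid_closure hs hgen hsp hpi δ rfl fun m ↦
    Matroid.closure_subset_closure_of_subset_closure (Set.singleton_subset_iff.mpr hxγ) (hx m)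

end GenericForm

/-- Moving Lemma for reduced curves (Lemma 4.12): let `t ∈ L[X,Y,Z]` be a nonzero
squarefree homogeneous polynomial of degree `e` (a reduced projective plane curve) and let
`s ∈ K[X,Y,Z]` be homogeneous of degree `d` with all of its coefficients (indexed by the
monomials of degree `d`) algebraically independent over `L` (a generic degree-`d` curve).
Then at every nonzero common zero `p` of `s` and `t`, the gradients of `s` and `t` are
linearly independent over `K`: the generic curve meets `t = 0` transversally at simple
points. -/
theorem moving_lemma_reduced_curves (L K : Type) [Field L] [IsAlgClosed L]
    [Field K] [IsAlgClosed K] [Algebra L K] (d e : ℕ) (hd : 1 ≤ d) (he : 1 ≤ e)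
    (t : MvPolynomial (Fin 3) L) (ht0 : t ≠ 0) (htsf : Squarefree t)
    (hthom : t.IsHomogeneous e)
    (s : MvPolynomial (Fin 3) K) (hshom : s.IsHomogeneous d)
    (hgen : AlgebraicIndependent L
      (fun α : {α : Fin 3 →₀ ℕ // α 0 + α 1 + α 2 = d} => s.coeff (α : Fin 3 →₀ ℕ))) :
    ∀ p : Fin 3 → K, p ≠ 0 → eval p s = 0 →
      eval p (MvPolynomial.map (algebraMap L K) t) = 0 →
      LinearIndependent K
        ![(fun i : Fin 3 => eval p (pderiv i s)),
          (fun i : Fin 3 => eval p (pderiv i (MvPolynomial.map (algebraMap L K) t)))] := by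
  intro p hp hsp htp
  obtain ⟨i, hi⟩ : ∃ i, p i ≠ 0 := Function.ne_iff.mp hp
  have := IsAlgClosed.instInfinite (K := L)
  simp only [pderiv_map, eval_map, ← aeval_def] at htp ⊢
  have hscale : ∀ m, p m = p i * ((p i)⁻¹ * p m) := fun m ↦ (mul_inv_cancel_left₀ hi _).symm
  have hsc : ∀ {n : ℕ} {f : MvPolynomial (Fin 3) K}, f.IsHomogeneous n →
      eval p f = p i ^ n * eval (fun m ↦ (p i)⁻¹ * p m) f := fun {n f} hf ↦ by
    have h := hf.aeval_mul_left (p i) fun m ↦ (p i)⁻¹ * p m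
    simpa only [← hscale, aeval_eq_eval] using h
  have htc : ∀ {n : ℕ} {f : MvPolynomial (Fin 3) L}, f.IsHomogeneous n →
      aeval p f = p i ^ n * aeval (fun m ↦ (p i)⁻¹ * p m) f := fun {n f} hf ↦ by
    have h := hf.aeval_mul_left (p i) fun m ↦ (p i)⁻¹ * p m
    simpa only [← hscale] using h
  obtain ⟨j, l, hjl⟩ := AlgebraicIndependent.exists_minor_ne_zero ht0 htsf hthom hd hshom hgen
    (p := fun m ↦ (p i)⁻¹ * p m) (inv_mul_cancel₀ hi)
    ((mul_eq_zero.mp ((hsc hshom).symm.trans hsp)).resolve_left (pow_ne_zero _ hi))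
    ((mul_eq_zero.mp ((htc hthom).symm.trans htp)).resolve_left (pow_ne_zero _ hi))
  have hminor : eval p (pderiv j s) * aeval p (pderiv l t) -
      eval p (pderiv l s) * aeval p (pderiv j t) ≠ 0 := by
    rw [hsc hshom.pderiv, hsc hshom.pderiv, htc hthom.pderiv, htc hthom.pderiv]
    convert mul_ne_zero (mul_ne_zero (pow_ne_zero (d - 1) hi) (pow_ne_zero (e - 1) hi)) hjl using 1
    ring
  rw [LinearIndependent.pair_iff]
  intro a b hab
  have hj := congrFun hab j
  have hl := congrFun hab l
  simp only [Pi.add_apply, Pi.smul_apply, smul_eq_mul, Pi.zero_apply] at hj hl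
  constructor
  · refine (mul_eq_zero.mp ?_).resolve_right hminor
    linear_combination aeval p (pderiv l t) * hj - aeval p (pderiv j t) * hl
  · refine (mul_eq_zero.mp ?_).resolve_right hminor
    linear_combination eval p (pderiv j s) * hl - eval p (pderiv l s) * hj
end
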